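/- The 50-point fully symmetric rule with weight 16π/315 at each of the six points (±1, 0, 0), (0, ±1, 0), (0, 0, ±1); weight 256π/2835 at each of the twelve points whose coordinates are a permutation of (±1/√2, ±1/√2, 0); weight 27π/320 at each of the eight points (±1/√3, ±1/√3, ±1/√3); and weight 14641π/181440 at each of the twenty-four points whose coordinates are a permutation of (±1/√11, ±1/√11, ±3/√11) (two coordinates of absolute value 1/√11 and one of absolute value 3/√11), is a cubature rule of degree 11 for U₃: for every polynomial p in three variables of total degree at most 11, ∫_{U₃} p dσ equals the corresponding weighted sum of the values of p at these 50 points. -/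

import Mathlib

open MeasureTheory MvPolynomial

/-!
Integrating a monomial against the Gaussian `exp (-‖x‖²)`, once coordinatewise and once in polar
coordinates, evaluates the moments of the unit sphere (Folland): a monomial with an odd exponent
integrates to `0`, and `∏ xᵢ ^ (2kᵢ)` integrates to `2 ∏ Γ(kᵢ + 1/2) / Γ(∑ kᵢ + n/2)`.

Let `L` be the difference of the integral over the sphere and the rule. Both terms vanish on
monomials with an odd exponent, and neither changes when a polynomial is multiplied by `∑ xᵢ²`, all
nodes being unit vectors. Hence `L` vanishes up to degree 11 as soon as it vanishes on the monomials
`x^(2i) y^(2j) z^(2k)` with `i + j + k = 5`, which is a finite check.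
-/

open Set Metric

section PolarCoordinates

variable {E F : Type*} [NormedAddCommGroup E] [NormedSpace ℝ E] [MeasurableSpace E] [BorelSpace E]
  [FiniteDimensional ℝ E] [NormedAddCommGroup F] [NormedSpace ℝ F]

theorem integral_volumeIoiPow (n : ℕ) (g : ℝ → F) :
    ∫ r : Ioi (0 : ℝ), g r ∂Measure.volumeIoiPow n = ∫ r in Ioi (0 : ℝ), r ^ n • g r := by
  have h_meas : Measurable fun r : Ioi (0 : ℝ) => (r.1 ^ n).toNNReal :=
    (measurable_subtype_coe.pow_const _).real_toNNReal
  simp only [Measure.volumeIoiPow, ENNReal.ofReal]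
  rw [integral_withDensity_eq_integral_smul h_meas,
    integral_subtype_comap measurableSet_Ioi fun r => (r ^ n).toNNReal • g r]
  refine setIntegral_congr_fun measurableSet_Ioi fun r hr => ?_
  simp only [NNReal.smul_def, Real.coe_toNNReal _ (pow_nonneg (mem_Ioi.1 hr).le n)]

variable [Nontrivial E] (μ : Measure E) [μ.IsAddHaarMeasure]

theorem integral_eq_integral_toSphere_prod_volumeIoiPow (f : E → F) :
    ∫ x, f x ∂μ = ∫ z : sphere (0 : E) 1 × Ioi (0 : ℝ), f (z.2.1 • z.1.1)
      ∂μ.toSphere.prod (.volumeIoiPow (Module.finrank ℝ E - 1)) := by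
  rw [← μ.measurePreserving_homeomorphUnitSphereProd.integral_comp
      (Homeomorph.measurableEmbedding _)]
  have h_inv (x : ({0}ᶜ : Set E)) : ‖x.1‖ • ‖x.1‖⁻¹ • x.1 = x.1 :=
    smul_inv_smul₀ (norm_ne_zero_iff.2 x.2) x.1
  simp only [homeomorphUnitSphereProd_apply_fst_coe, homeomorphUnitSphereProd_apply_snd_coe, h_inv]
  rw [integral_subtype_comap (measurableSet_singleton _).compl f, restrict_compl_singleton]

theorem integral_homogeneous_mul_radial {f : E → ℝ} {n : ℕ}
    (hf : ∀ r : ℝ, 0 < r → ∀ x, f (r • x) = r ^ n * f x) (g : ℝ → ℝ) :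
    ∫ x, f x * g ‖x‖ ∂μ = (∫ v : sphere (0 : E) 1, f v ∂μ.toSphere) *
      ∫ r in Ioi (0 : ℝ), r ^ (n + (Module.finrank ℝ E - 1)) * g r := by
  have h_split (z : sphere (0 : E) 1 × Ioi (0 : ℝ)) :
      f (z.2.1 • z.1.1) * g ‖z.2.1 • z.1.1‖ = f z.1 * (z.2.1 ^ n * g z.2) := by
    have hr : 0 < z.2.1 := z.2.2
    rw [hf _ hr, norm_smul, norm_eq_of_mem_sphere, mul_one, Real.norm_of_nonneg hr.le]
    ring
  rw [integral_eq_integral_toSphere_prod_volumeIoiPow]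
  simp only [h_split]
  rw [integral_prod_mul (fun v : sphere (0 : E) 1 => f v)
      (fun r : Ioi (0 : ℝ) => r.1 ^ n * g r), integral_volumeIoiPow _ fun r => r ^ n * g r]
  simp only [smul_eq_mul, pow_add, mul_assoc, mul_left_comm]

end PolarCoordinates

section GaussianMoments

theorem integral_Ioi_pow_mul_exp_neg_sq (n : ℕ) :
    ∫ r in Ioi (0 : ℝ), r ^ n * Real.exp (-r ^ 2) = Real.Gamma ((n + 1) / 2) / 2 := by
  have h := integral_rpow_mul_exp_neg_rpow (p := 2) (q := n) two_pos
    (neg_one_lt_zero.trans_le n.cast_nonneg)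
  simp only [Real.rpow_natCast, Real.rpow_two] at h
  rw [h]
  ring

theorem integral_even_pow_mul_exp_neg_sq (k : ℕ) :
    ∫ r : ℝ, r ^ (2 * k) * Real.exp (-r ^ 2) = Real.Gamma (k + 1 / 2) := by
  have h_abs := integral_comp_abs (f := fun r : ℝ => r ^ (2 * k) * Real.exp (-r ^ 2))
  have h_arg : (((2 * k : ℕ) : ℝ) + 1) / 2 = k + 1 / 2 := by push_cast; ring
  rw [integral_Ioi_pow_mul_exp_neg_sq, h_arg, mul_div_cancel₀ _ two_ne_zero] at h_abs
  simpa only [pow_mul, sq_abs] using h_abs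

theorem integral_odd_pow_mul_exp_neg_sq {n : ℕ} (hn : Odd n) :
    ∫ r : ℝ, r ^ n * Real.exp (-r ^ 2) = 0 := by
  have h := integral_neg_eq_self (fun r : ℝ => r ^ n * Real.exp (-r ^ 2)) volume
  simp only [hn.neg_pow, neg_sq, neg_mul, integral_neg] at h
  exact self_eq_neg.1 h.symm

theorem integral_prod_pow_mul_exp_neg_norm_sq {ι : Type*} [Fintype ι] (d : ι → ℕ) :
    ∫ x : EuclideanSpace ℝ ι, (∏ i, x i ^ d i) * Real.exp (-‖x‖ ^ 2) =
      ∏ i, ∫ r : ℝ, r ^ d i * Real.exp (-r ^ 2) := by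
  rw [← integral_fintype_prod_volume_eq_prod (fun i (r : ℝ) => r ^ d i * Real.exp (-r ^ 2)),
    ← (PiLp.volume_preserving_toLp ι).integral_comp
      (MeasurableEquiv.toLp 2 _).measurableEmbedding]
  simp only [EuclideanSpace.norm_sq_eq, Real.norm_eq_abs, sq_abs, ← Finset.sum_neg_distrib,
    Real.exp_sum, Finset.prod_mul_distrib]

end GaussianMoments

section SphereMoments

variable {ι : Type*} [Fintype ι]

theorem integral_sphere_prod_pow_mul_Gamma [Nonempty ι] (d : ι → ℕ) :
    (∫ v : sphere (0 : EuclideanSpace ℝ ι) 1, ∏ i, v.1 i ^ d i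
        ∂(volume : Measure (EuclideanSpace ℝ ι)).toSphere) *
      (Real.Gamma (((∑ i, d i : ℕ) + Fintype.card ι) / 2) / 2) =
      ∏ i, ∫ r : ℝ, r ^ d i * Real.exp (-r ^ 2) := by
  have h_hom (r : ℝ) (x : EuclideanSpace ℝ ι) :
      ∏ i, (r • x) i ^ d i = r ^ (∑ i, d i) * ∏ i, x i ^ d i := by
    simp only [PiLp.smul_apply, smul_eq_mul, mul_pow, Finset.prod_mul_distrib,
      Finset.prod_pow_eq_pow_sum]
  have h_dim : ∑ i, d i + (Fintype.card ι - 1) + 1 = ∑ i, d i + Fintype.card ι := by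
    have := Fintype.card_pos (α := ι)
    omega
  rw [← integral_prod_pow_mul_exp_neg_norm_sq,
    integral_homogeneous_mul_radial volume (fun r _ => h_hom r) (fun r => Real.exp (-r ^ 2)),
    integral_Ioi_pow_mul_exp_neg_sq, finrank_euclideanSpace, ← Nat.cast_add_one, h_dim,
    Nat.cast_add]

theorem integrable_eval_sphere (p : MvPolynomial ι ℝ) :
    Integrable (fun v : sphere (0 : EuclideanSpace ℝ ι) 1 => eval (fun i => v.1 i) p)
      (volume : Measure (EuclideanSpace ℝ ι)).toSphere := by
  have h_cont : Continuous fun v : sphere (0 : EuclideanSpace ℝ ι) 1 => eval (fun i => v.1 i) p :=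
    p.continuous_eval.comp (by fun_prop)
  exact h_cont.integrable_of_hasCompactSupport (.of_compactSpace _)

variable (ι) in
/-- Integration over the Euclidean unit sphere, as a linear functional on polynomials. -/
noncomputable def sphereIntegral : MvPolynomial ι ℝ →ₗ[ℝ] ℝ where
  toFun p := ∫ v : sphere (0 : EuclideanSpace ℝ ι) 1, eval (fun i => v.1 i) p
    ∂(volume : Measure (EuclideanSpace ℝ ι)).toSphere
  map_add' p q := by
    simp only [map_add]
    exact integral_add (integrable_eval_sphere p) (integrable_eval_sphere q)
  map_smul' c p := by
    simp only [smul_eval, integral_const_mul, RingHom.id_apply, smul_eq_mul]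

theorem sphereIntegral_apply (p : MvPolynomial ι ℝ) :
    sphereIntegral ι p = ∫ v : sphere (0 : EuclideanSpace ℝ ι) 1, eval (fun i => v.1 i) p
      ∂(volume : Measure (EuclideanSpace ℝ ι)).toSphere :=
  rfl

theorem sphereIntegral_sum_X_sq_mul (p : MvPolynomial ι ℝ) :
    sphereIntegral ι ((∑ i, X i ^ 2) * p) = sphereIntegral ι p := by
  have h_unit (v : sphere (0 : EuclideanSpace ℝ ι) 1) : ∑ i, v.1 i ^ 2 = 1 := by
    rw [← EuclideanSpace.real_norm_sq_eq, norm_eq_of_mem_sphere, one_pow]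
  simp only [sphereIntegral_apply, map_mul, map_sum, map_pow, eval_X, h_unit, one_mul]

variable [Nonempty ι]

theorem sphereIntegral_monomial_mul_Gamma (d : ι →₀ ℕ) :
    sphereIntegral ι (monomial d 1) * (Real.Gamma ((d.degree + Fintype.card ι) / 2) / 2) =
      ∏ i, ∫ r : ℝ, r ^ d i * Real.exp (-r ^ 2) := by
  rw [← integral_sphere_prod_pow_mul_Gamma, Finsupp.degree_eq_sum]
  simp only [sphereIntegral_apply, eval_monomial, one_mul,
    Finsupp.prod_fintype _ _ fun _ => pow_zero _]

theorem sphereIntegral_monomial_of_odd {d : ι →₀ ℕ} {i : ι} (hi : Odd (d i)) :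
    sphereIntegral ι (monomial d 1) = 0 := by
  have h := sphereIntegral_monomial_mul_Gamma d
  rw [Finset.prod_eq_zero (Finset.mem_univ i) (integral_odd_pow_mul_exp_neg_sq hi)] at h
  have h_Gamma : 0 < Real.Gamma ((d.degree + Fintype.card ι) / 2) :=
    Real.Gamma_pos_of_pos (by positivity)
  exact (mul_eq_zero.1 h).resolve_right (half_pos h_Gamma).ne'

theorem sphereIntegral_monomial_two_nsmul (k : ι →₀ ℕ) :
    sphereIntegral ι (monomial (2 • k) 1) =
      2 * (∏ i, Real.Gamma (k i + 1 / 2)) / Real.Gamma (k.degree + Fintype.card ι / 2) := by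
  have h := sphereIntegral_monomial_mul_Gamma (2 • k)
  have h_arg : (((2 • k).degree : ℝ) + Fintype.card ι) / 2 = k.degree + Fintype.card ι / 2 := by
    rw [map_nsmul, smul_eq_mul, Nat.cast_mul, Nat.cast_two]
    ring
  simp only [h_arg, Finsupp.smul_apply, smul_eq_mul, integral_even_pow_mul_exp_neg_sq] at h
  have h_Gamma : 0 < Real.Gamma (k.degree + Fintype.card ι / 2) :=
    Real.Gamma_pos_of_pos (by positivity)
  rw [eq_div_iff h_Gamma.ne', ← h]
  ring

open scoped Nat in
/-- For `k i = 0` the truncated subtraction gives `0‼ = 1`, the usual value of `(-1)‼`. -/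
theorem sphereIntegral_fin_three_monomial_two_nsmul (k : Fin 3 →₀ ℕ) :
    sphereIntegral (Fin 3) (monomial (2 • k) 1) =
      4 * Real.pi * ((∏ i, ((2 * k i - 1)‼ : ℝ)) / (2 * k.degree + 1)‼) := by
  have h_arg : (k.degree : ℝ) + Fintype.card (Fin 3) / 2 = (k.degree + 1 : ℕ) + 1 / 2 := by
    rw [Fintype.card_fin]
    push_cast
    ring
  have h_pow : ∏ i, (2 : ℝ) ^ k i = 2 ^ k.degree := by
    rw [Finset.prod_pow_eq_pow_sum, Finsupp.degree_eq_sum]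
  rw [sphereIntegral_monomial_two_nsmul, h_arg, Real.Gamma_nat_add_half]
  simp only [Real.Gamma_nat_add_half, Finset.prod_div_distrib, Finset.prod_mul_distrib, h_pow,
    Finset.prod_const, Finset.card_univ, Fintype.card_fin]
  rw [show 2 * (k.degree + 1) - 1 = 2 * k.degree + 1 by omega]
  field_simp
  rw [Real.sq_sqrt Real.pi_pos.le]
  ring

end SphereMoments

section EvenFunctionals

variable {σ R M : Type*} [Fintype σ] [CommSemiring R] [AddCommMonoid M] [Module R M]

theorem map_monomial_two_nsmul_eq_zero_of_degree_le {L : MvPolynomial σ R →ₗ[R] M} {n : ℕ}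
    (h_sphere : ∀ p, L ((∑ i, X i ^ 2) * p) = L p)
    (h_top : ∀ k : σ →₀ ℕ, k.degree = n → L (monomial (2 • k) 1) = 0)
    {k : σ →₀ ℕ} (hk : k.degree ≤ n) : L (monomial (2 • k) 1) = 0 := by
  induction hm : n - k.degree generalizing k with
  | zero => exact h_top k (by omega)
  | succ m ih =>
    have h_mul (i : σ) : (X i ^ 2 * monomial (2 • k) 1 : MvPolynomial σ R) =
        monomial (2 • (Finsupp.single i 1 + k)) 1 := by
      rw [X_pow_eq_monomial, monomial_mul, one_mul, smul_add, Finsupp.smul_single, smul_eq_mul,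
        mul_one]
    have h_deg (i : σ) : (Finsupp.single i 1 + k).degree = 1 + k.degree := by
      rw [map_add, Finsupp.degree_single]
    rw [← h_sphere, Finset.sum_mul, map_sum]
    refine Finset.sum_eq_zero fun i _ => ?_
    rw [h_mul]
    exact ih (by rw [h_deg]; omega) (by rw [h_deg]; omega)

theorem map_eq_zero_of_totalDegree_le_two_mul_add_one {L : MvPolynomial σ R →ₗ[R] M} {n : ℕ}
    (h_odd : ∀ (d : σ →₀ ℕ) (i : σ), Odd (d i) → L (monomial d 1) = 0)
    (h_sphere : ∀ p, L ((∑ i, X i ^ 2) * p) = L p)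
    (h_top : ∀ k : σ →₀ ℕ, k.degree = n → L (monomial (2 • k) 1) = 0)
    {p : MvPolynomial σ R} (hp : p.totalDegree ≤ 2 * n + 1) : L p = 0 := by
  have h_monomial {d : σ →₀ ℕ} (hd : d.degree ≤ 2 * n + 1) : L (monomial d 1) = 0 := by
    by_cases h : ∃ i, Odd (d i)
    · obtain ⟨i, hi⟩ := h
      exact h_odd d i hi
    · simp only [not_exists, Nat.not_odd_iff_even, even_iff_two_dvd] at h
      obtain ⟨k, rfl⟩ : ∃ k : σ →₀ ℕ, d = 2 • k :=
        ⟨d.mapRange (· / 2) rfl, Finsupp.ext fun i => (Nat.mul_div_cancel' (h i)).symm⟩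
      rw [map_nsmul, smul_eq_mul] at hd
      exact map_monomial_two_nsmul_eq_zero_of_degree_le h_sphere h_top (by omega)
  rw [p.as_sum, map_sum]
  refine Finset.sum_eq_zero fun d hd => ?_
  have h_smul : monomial d (p.coeff d) = p.coeff d • monomial d (1 : R) := by
    rw [smul_monomial, smul_eq_mul, mul_one]
  rw [h_smul, map_smul, h_monomial ((le_totalDegree hd).trans hp), smul_zero]

end EvenFunctionals

section OrbitSums

variable {ι R : Type*} [Fintype ι] [DecidableEq ι] [CommRing R]

theorem sum_signs_prod_mul_pow (x : ι → R) (d : ι → ℕ) :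
    ∑ s : ι → ℤˣ, ∏ i, ((s i : ℤ) * x i) ^ d i = ∏ i, (1 + (-1) ^ d i) * x i ^ d i := by
  have h_factor (i : ι) :
      (1 + (-1) ^ d i) * x i ^ d i = ∑ u : ℤˣ, (((u : ℤ) : R) * x i) ^ d i := by
    simp [UnitsInt.univ, add_mul, mul_pow]
  simp only [h_factor, Finset.prod_univ_sum, Fintype.piFinset_univ]

/-- The sum of the values of a polynomial over all points with one coordinate `±a` and the others
`±b`, indexed by the position of `±a` and the choice of signs. For special `a` and `b` the points
repeat: `orbitSum 1 0` on `Fin 3` counts each of its six points four times. -/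
noncomputable def orbitSum (a b : R) : MvPolynomial ι R →ₗ[R] R :=
  ∑ i, ∑ s : ι → ℤˣ,
    (aeval fun j => ((s j : ℤ) : R) * Function.update (fun _ => b) i a j).toLinearMap

theorem orbitSum_apply (a b : R) (p : MvPolynomial ι R) :
    orbitSum a b p = ∑ i, ∑ s : ι → ℤˣ,
      eval (fun j => ((s j : ℤ) : R) * Function.update (fun _ => b) i a j) p := by
  simp only [orbitSum, LinearMap.sum_apply, AlgHom.toLinearMap_apply, aeval_eq_eval]

theorem orbitSum_sum_X_sq_mul {a b : R} (h : a ^ 2 + (Fintype.card ι - 1 : ℕ) * b ^ 2 = 1)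
    (p : MvPolynomial ι R) : orbitSum a b ((∑ i, X i ^ 2) * p) = orbitSum a b p := by
  have h_unit (i : ι) (s : ι → ℤˣ) :
      ∑ j, (((s j : ℤ) : R) * Function.update (fun _ => b) i a j) ^ 2 = 1 := by
    have h_other : ∀ j ∈ Finset.univ.erase i, Function.update (fun _ => b) i a j ^ 2 = b ^ 2 :=
      fun j hj => by rw [Function.update_of_ne (Finset.ne_of_mem_erase hj)]
    simp only [mul_pow, ← Int.cast_pow, ← Units.val_pow_eq_pow_val, Int.units_sq, Units.val_one,
      Int.cast_one, one_mul]
    rw [← Finset.add_sum_erase _ _ (Finset.mem_univ i), Finset.sum_congr rfl h_other,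
      Function.update_self, Finset.sum_const, Finset.card_erase_of_mem (Finset.mem_univ i),
      Finset.card_univ, nsmul_eq_mul, h]
  simp only [orbitSum_apply, map_mul, map_sum, map_pow, eval_X, h_unit, one_mul]

theorem orbitSum_monomial (a b : R) (d : ι →₀ ℕ) :
    orbitSum a b (monomial d 1) =
      ∑ i, ∏ j, (1 + (-1) ^ d j) * Function.update (fun _ => b) i a j ^ d j := by
  simp only [orbitSum_apply, eval_monomial, one_mul, Finsupp.prod_fintype _ _ fun _ => pow_zero _,
    sum_signs_prod_mul_pow]

theorem orbitSum_monomial_of_odd (a b : R) {d : ι →₀ ℕ} {i : ι} (hi : Odd (d i)) :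
    orbitSum a b (monomial d 1) = 0 := by
  rw [orbitSum_monomial]
  refine Finset.sum_eq_zero fun _ _ => Finset.prod_eq_zero (Finset.mem_univ i) ?_
  rw [hi.neg_one_pow, add_neg_cancel, zero_mul]

theorem orbitSum_monomial_two_nsmul (a b : R) (k : ι →₀ ℕ) :
    orbitSum a b (monomial (2 • k) 1) =
      2 ^ Fintype.card ι * ∑ i, (a ^ 2) ^ k i * (b ^ 2) ^ (k.degree - k i) := by
  have h_sign (j : ι) : (1 + (-1) ^ (2 * k j) : R) = 2 := by
    rw [(even_two_mul _).neg_one_pow, one_add_one_eq_two]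
  have h_prod (i : ι) : ∏ j, Function.update (fun _ => b) i a j ^ (2 * k j) =
      (a ^ 2) ^ k i * (b ^ 2) ^ (k.degree - k i) := by
    have h_other : ∀ j ∈ Finset.univ.erase i,
        Function.update (fun _ => b) i a j ^ (2 * k j) = (b ^ 2) ^ k j := fun j hj => by
      rw [Function.update_of_ne (Finset.ne_of_mem_erase hj), pow_mul]
    have h_deg : k.degree = k i + ∑ j ∈ Finset.univ.erase i, k j := by
      rw [Finsupp.degree_eq_sum, Finset.add_sum_erase _ _ (Finset.mem_univ i)]
    rw [← Finset.mul_prod_erase _ _ (Finset.mem_univ i), Function.update_self, pow_mul,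
      Finset.prod_congr rfl h_other, Finset.prod_pow_eq_pow_sum, h_deg, Nat.add_sub_cancel_left]
  simp only [orbitSum_monomial, Finsupp.smul_apply, smul_eq_mul, h_sign, Finset.prod_mul_distrib,
    Finset.prod_const, Finset.card_univ, ← Finset.mul_sum, h_prod]

theorem sum_signs_fin_three {M : Type*} [AddCommMonoid M] (f : (Fin 3 → ℤˣ) → M) :
    ∑ s, f s = f ![1, 1, 1] + f ![1, 1, -1] + f ![1, -1, 1] + f ![1, -1, -1] +
      f ![-1, 1, 1] + f ![-1, 1, -1] + f ![-1, -1, 1] + f ![-1, -1, -1] := by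
  have h_univ : (Finset.univ : Finset (Fin 3 → ℤˣ)) = {![1, 1, 1], ![1, 1, -1], ![1, -1, 1],
      ![1, -1, -1], ![-1, 1, 1], ![-1, 1, -1], ![-1, -1, 1], ![-1, -1, -1]} := by
    decide
  simp [h_univ, add_assoc]

theorem orbitSum_fin_three (a b : R) (p : MvPolynomial (Fin 3) R) :
    orbitSum a b p =
      eval ![a, b, b] p + eval ![a, b, -b] p + eval ![a, -b, b] p + eval ![a, -b, -b] p +
      eval ![-a, b, b] p + eval ![-a, b, -b] p + eval ![-a, -b, b] p + eval ![-a, -b, -b] p +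
      eval ![b, a, b] p + eval ![b, a, -b] p + eval ![b, -a, b] p + eval ![b, -a, -b] p +
      eval ![-b, a, b] p + eval ![-b, a, -b] p + eval ![-b, -a, b] p + eval ![-b, -a, -b] p +
      eval ![b, b, a] p + eval ![b, b, -a] p + eval ![b, -b, a] p + eval ![b, -b, -a] p +
      eval ![-b, b, a] p + eval ![-b, b, -a] p + eval ![-b, -b, a] p + eval ![-b, -b, -a] p := by
  have h_update (i : Fin 3) : Function.update (fun _ => b) i a =
      ![![a, b, b], ![b, a, b], ![b, b, a]] i := by
    ext j
    fin_cases i <;> fin_cases j <;> rfl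
  have h_eval (x y : Fin 3 → R) :
      eval (fun j => x j * y j) p = eval ![x 0 * y 0, x 1 * y 1, x 2 * y 2] p := by
    congr 2
    ext j
    fin_cases j <;> rfl
  simp only [orbitSum_apply, sum_signs_fin_three, Fin.sum_univ_three, h_update, h_eval,
    Matrix.cons_val, Units.val_one, Units.val_neg, Int.cast_one, Int.cast_neg, one_mul, neg_mul]
  ring

end OrbitSums

section FiftyPointRule

/-- The 50-point rule as a linear functional, its nodes being the orbits of `(1, 0, 0)`,
`(0, β, β)`, `(ε, ε, ε)` and `(η, ζ, ζ)`. The weights are divided by `4`, `2`, `3` and `1`, the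
number of times `orbitSum` counts each node. -/
noncomputable def fiftyPointRule (β ε ζ η : ℝ) : MvPolynomial (Fin 3) ℝ →ₗ[ℝ] ℝ :=
  (16 * Real.pi / 315 / 4) • orbitSum 1 0 + (256 * Real.pi / 2835 / 2) • orbitSum 0 β +
    (27 * Real.pi / 320 / 3) • orbitSum ε ε + (14641 * Real.pi / 181440) • orbitSum η ζ

variable {β ε ζ η : ℝ}

theorem fiftyPointRule_monomial_of_odd {d : Fin 3 →₀ ℕ} {i : Fin 3} (hi : Odd (d i)) :
    fiftyPointRule β ε ζ η (monomial d 1) = 0 := by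
  simp only [fiftyPointRule, LinearMap.add_apply, LinearMap.smul_apply,
    orbitSum_monomial_of_odd _ _ hi, smul_zero, add_zero]

theorem fiftyPointRule_sum_X_sq_mul (hβ : β ^ 2 = 1 / 2) (hε : ε ^ 2 = 1 / 3)
    (hζ : ζ ^ 2 = 1 / 11) (hη : η ^ 2 = 9 / 11) (p : MvPolynomial (Fin 3) ℝ) :
    fiftyPointRule β ε ζ η ((∑ i, X i ^ 2) * p) = fiftyPointRule β ε ζ η p := by
  have h_axes : (1 : ℝ) ^ 2 + (Fintype.card (Fin 3) - 1 : ℕ) * 0 ^ 2 = 1 := by norm_num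
  have h_edges : (0 : ℝ) ^ 2 + (Fintype.card (Fin 3) - 1 : ℕ) * β ^ 2 = 1 := by norm_num [hβ]
  have h_corners : ε ^ 2 + (Fintype.card (Fin 3) - 1 : ℕ) * ε ^ 2 = 1 := by norm_num [hε]
  have h_faces : η ^ 2 + (Fintype.card (Fin 3) - 1 : ℕ) * ζ ^ 2 = 1 := by norm_num [hζ, hη]
  simp only [fiftyPointRule, LinearMap.add_apply, LinearMap.smul_apply,
    orbitSum_sum_X_sq_mul h_axes, orbitSum_sum_X_sq_mul h_edges, orbitSum_sum_X_sq_mul h_corners,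
    orbitSum_sum_X_sq_mul h_faces]

/-- The contribution of an exponent `2n` to the value, divided by `π`, of the 50-point rule on an
even monomial of degree 10. The factor `2 ^ 3` counts the sign patterns, and the other two exponents
enter only through their sum `2 * (5 - n)`. -/
noncomputable def exponentShare (n : ℕ) : ℝ :=
  2 ^ 3 * (16 / 315 / 4 * 0 ^ (5 - n) + 256 / 2835 / 2 * (0 ^ n * (1 / 2) ^ (5 - n)) +
    27 / 320 / 3 * (1 / 3) ^ 5 + 14641 / 181440 * ((9 / 11) ^ n * (1 / 11) ^ (5 - n)))

theorem fiftyPointRule_monomial_two_nsmul (hβ : β ^ 2 = 1 / 2) (hε : ε ^ 2 = 1 / 3)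
    (hζ : ζ ^ 2 = 1 / 11) (hη : η ^ 2 = 9 / 11) {k : Fin 3 →₀ ℕ} (hk : k.degree = 5) :
    fiftyPointRule β ε ζ η (monomial (2 • k) 1) = Real.pi * ∑ i, exponentShare (k i) := by
  have h_le (i : Fin 3) : k i ≤ 5 := hk ▸ Finsupp.le_degree i k
  have h_corner (i : Fin 3) : (1 / 3 : ℝ) ^ k i * (1 / 3) ^ (5 - k i) = (1 / 3) ^ 5 := by
    rw [← pow_add, Nat.add_sub_cancel' (h_le i)]
  have h_zero : (0 : ℝ) ^ 2 = 0 := zero_pow two_ne_zero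
  simp only [fiftyPointRule, LinearMap.add_apply, LinearMap.smul_apply, smul_eq_mul,
    orbitSum_monomial_two_nsmul, hk, hβ, hε, hζ, hη, one_pow, h_zero, one_mul, h_corner,
    Fintype.card_fin, exponentShare, Fin.sum_univ_three]
  ring

open scoped Nat in
/-- Up to permutation of the coordinates these are five equations, one for each partition of `5`
into at most three parts. -/
theorem sum_exponentShare {k : Fin 3 → ℕ} (hk : ∑ i, k i = 5) :
    ∑ i, exponentShare (k i) = 4 * ((∏ i, ((2 * k i - 1)‼ : ℝ)) / 11‼) := by
  rw [Fin.sum_univ_three] at hk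
  rw [Fin.sum_univ_three, Fin.prod_univ_three]
  generalize k 0 = a, k 1 = b, k 2 = c at *
  have ha : a ≤ 5 := by omega
  have hb : b ≤ 5 - a := by omega
  obtain rfl : c = 5 - a - b := by omega
  clear hk
  interval_cases a <;> interval_cases b <;> norm_num [exponentShare, Nat.doubleFactorial]

theorem sphereIntegral_eq_fiftyPointRule (hβ : β ^ 2 = 1 / 2) (hε : ε ^ 2 = 1 / 3)
    (hζ : ζ ^ 2 = 1 / 11) (hη : η ^ 2 = 9 / 11) {p : MvPolynomial (Fin 3) ℝ}
    (hp : p.totalDegree ≤ 11) :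
    sphereIntegral (Fin 3) p = fiftyPointRule β ε ζ η p := by
  rw [← sub_eq_zero, ← LinearMap.sub_apply]
  refine map_eq_zero_of_totalDegree_le_two_mul_add_one (n := 5)
    (fun d i hi => ?_) (fun q => ?_) (fun k hk => ?_) hp
  · rw [LinearMap.sub_apply, sphereIntegral_monomial_of_odd hi, fiftyPointRule_monomial_of_odd hi,
      sub_zero]
  · rw [LinearMap.sub_apply, LinearMap.sub_apply, sphereIntegral_sum_X_sq_mul,
      fiftyPointRule_sum_X_sq_mul hβ hε hζ hη]
  · rw [LinearMap.sub_apply, sphereIntegral_fin_three_monomial_two_nsmul,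
      fiftyPointRule_monomial_two_nsmul hβ hε hζ hη hk,
      sum_exponentShare (by rw [← Finsupp.degree_eq_sum, hk]), hk]
    ring

end FiftyPointRule

/-- The 50-point fully symmetric rule with weight `16π/315` at the six points
`(±1,0,0), (0,±1,0), (0,0,±1)`; weight `256π/2835` at the twelve points whose coordinates are
a permutation of `(±1/√2, ±1/√2, 0)`; weight `27π/320` at the eight points
`(±1/√3, ±1/√3, ±1/√3)`; and weight `14641π/181440` at the twenty-four points whose
coordinates are a permutation of `(±1/√11, ±1/√11, ±3/√11)`, is a cubature rule of degree 11
for `U₃`. -/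
theorem degree11_rule_50pt (β ε ζ η : ℝ) (hβ : β = 1 / Real.sqrt 2) (hε : ε = 1 / Real.sqrt 3)
    (hζ : ζ = 1 / Real.sqrt 11) (hη : η = 3 / Real.sqrt 11)
    (p : MvPolynomial (Fin 3) ℝ) (hp : p.totalDegree ≤ 11) :
    ∫ v : Metric.sphere (0 : EuclideanSpace ℝ (Fin 3)) 1,
        eval (fun i => (v : EuclideanSpace ℝ (Fin 3)) i) p
      ∂((volume : Measure (EuclideanSpace ℝ (Fin 3))).toSphere) =
      (16 * Real.pi / 315) *
        (eval ![1, 0, 0] p +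
          eval ![-1, 0, 0] p +
          eval ![0, 1, 0] p +
          eval ![0, -1, 0] p +
          eval ![0, 0, 1] p +
          eval ![0, 0, -1] p) +
      (256 * Real.pi / 2835) *
        (eval ![0, β, β] p +
          eval ![0, β, -β] p +
          eval ![0, -β, β] p +
          eval ![0, -β, -β] p +
          eval ![β, 0, β] p +
          eval ![β, 0, -β] p +
          eval ![-β, 0, β] p +
          eval ![-β, 0, -β] p +
          eval ![β, β, 0] p +
          eval ![β, -β, 0] p +
          eval ![-β, β, 0] p +
          eval ![-β, -β, 0] p) +
      (27 * Real.pi / 320) *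
        (eval ![ε, ε, ε] p +
          eval ![ε, ε, -ε] p +
          eval ![ε, -ε, ε] p +
          eval ![ε, -ε, -ε] p +
          eval ![-ε, ε, ε] p +
          eval ![-ε, ε, -ε] p +
          eval ![-ε, -ε, ε] p +
          eval ![-ε, -ε, -ε] p) +
      (14641 * Real.pi / 181440) *
        (eval ![η, ζ, ζ] p +
          eval ![η, ζ, -ζ] p +
          eval ![η, -ζ, ζ] p +
          eval ![η, -ζ, -ζ] p +
          eval ![-η, ζ, ζ] p +
          eval ![-η, ζ, -ζ] p +
          eval ![-η, -ζ, ζ] p +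
          eval ![-η, -ζ, -ζ] p +
          eval ![ζ, η, ζ] p +
          eval ![ζ, η, -ζ] p +
          eval ![ζ, -η, ζ] p +
          eval ![ζ, -η, -ζ] p +
          eval ![-ζ, η, ζ] p +
          eval ![-ζ, η, -ζ] p +
          eval ![-ζ, -η, ζ] p +
          eval ![-ζ, -η, -ζ] p +
          eval ![ζ, ζ, η] p +
          eval ![ζ, ζ, -η] p +
          eval ![ζ, -ζ, η] p +
          eval ![ζ, -ζ, -η] p +
          eval ![-ζ, ζ, η] p +
          eval ![-ζ, ζ, -η] p +
          eval ![-ζ, -ζ, η] p +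
          eval ![-ζ, -ζ, -η] p) := by
  have hβ' : β ^ 2 = 1 / 2 := by rw [hβ, div_pow, Real.sq_sqrt zero_le_two, one_pow]
  have hε' : ε ^ 2 = 1 / 3 := by rw [hε, div_pow, Real.sq_sqrt zero_le_three, one_pow]
  have hζ' : ζ ^ 2 = 1 / 11 := by rw [hζ, div_pow, Real.sq_sqrt (by norm_num), one_pow]
  have hη' : η ^ 2 = 9 / 11 := by rw [hη, div_pow, Real.sq_sqrt (by norm_num)]; norm_num
  refine (sphereIntegral_eq_fiftyPointRule hβ' hε' hζ' hη' hp).trans ?_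
  simp only [fiftyPointRule, LinearMap.add_apply, LinearMap.smul_apply, smul_eq_mul,
    orbitSum_fin_three, neg_zero]
  ring
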